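/- arXiv:0812.4142 — 2 statements merged into one kernel-verified Lean document; each statement's English description precedes it below -/
import Mathlib

section
/- Let $-1 < u < 0$, let $x, x^-, t \in \mathbb{R}$, and let $g : (-1, u] \to \mathbb{R}$ be continuous. Define, for $\lambda \in (-1, u)$, $\phi(\lambda) = \sqrt{u - \lambda}\,(x - x^-) + \int_\lambda^u (g(\xi) + 6t)\sqrt{\xi - \lambda}\,d\xi$ and $\theta(\lambda) = \frac{1}{2\sqrt{u - \lambda}} \int_\lambda^u \frac{g(\xi)}{\sqrt{\xi - \lambda}}\,d\xi$. Then $\phi$ is differentiable on $(-1, u)$ with $\phi'(\lambda) = -\frac{x - x^-}{2\sqrt{u - \lambda}} - \sqrt{u - \lambda}\,\big(6t + \theta(\lambda)\big)$. -/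
open Set MeasureTheory intervalIntegral

/-!
Since `√y = 0` for `y ≤ 0`, the integral `∫_λ^u h(ξ) √(ξ - λ) dξ` may be taken over a fixed interval
`[a, u]` around `λ`. The square root is not Lipschitz near `0`, but
`|√b - √c| ≤ |b - c| / √|c|` for `c ≠ 0`, so the difference quotients at `λ` are dominated by
`|h(ξ)| / √|ξ - λ|`. If this is integrable, one may differentiate under the integral sign.
-/

open Filter Topology

lemma hasDerivAt_integral_of_dominated_loc_of_lip' {α 𝕜 E : Type*} [MeasurableSpace α]
    {μ : Measure α} [RCLike 𝕜] [NormedAddCommGroup E] [NormedSpace ℝ E] [NormedSpace 𝕜 E]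
    {F : 𝕜 → α → E} {F' : α → E} {x₀ : 𝕜} {s : Set 𝕜} {bound : α → ℝ} (hs : s ∈ 𝓝 x₀)
    (hF_meas : ∀ x ∈ s, AEStronglyMeasurable (F x) μ) (hF_int : Integrable (F x₀) μ)
    (hF'_int : Integrable F' μ)
    (h_lip : ∀ᵐ a ∂μ, ∀ x ∈ s, ‖F x a - F x₀ a‖ ≤ bound a * ‖x - x₀‖)
    (bound_integrable : Integrable bound μ)
    (h_diff : ∀ᵐ a ∂μ, HasDerivAt (F · a) (F' a) x₀) :
    HasDerivAt (fun x => ∫ a, F x a ∂μ) (∫ a, F' a ∂μ) x₀ := by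
  by_cases hE : CompleteSpace E
  · let L : E →L[𝕜] 𝕜 →L[𝕜] E := ContinuousLinearMap.smulRightL 𝕜 𝕜 E 1
    have key := (hasFDerivAt_integral_of_dominated_loc_of_lip' (F' := fun a => L (F' a)) hs
      hF_meas hF_int (L.continuous.comp_aestronglyMeasurable hF'_int.aestronglyMeasurable) h_lip
      bound_integrable (h_diff.mono fun a ha => ha.hasFDerivAt)).2
    rw [L.integral_comp_comm hF'_int] at key
    exact hasDerivAt_iff_hasFDerivAt.2 key
  · simpa [integral, hE] using! hasDerivAt_const x₀ (0 : E)

section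

variable {E : Type*} [NormedAddCommGroup E] [NormedSpace ℝ E]

lemma integral_eq_integral_of_eq_zero_left {f : ℝ → E} {a m u : ℝ} (ham : a ≤ m) (hmu : m ≤ u)
    (hf : ∀ ξ ∈ Ioc a m, f ξ = 0) : ∫ ξ in a..u, f ξ = ∫ ξ in m..u, f ξ := by
  rw [integral_of_le (ham.trans hmu), integral_of_le hmu]
  exact setIntegral_eq_of_subset_of_forall_sdiff_eq_zero measurableSet_Ioc (Ioc_subset_Ioc_left ham)
    fun ξ hξ => hf ξ ⟨hξ.1.1, not_lt.1 fun hm => hξ.2 ⟨hm, hξ.1.2⟩⟩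

lemma abs_sqrt_sub_sqrt_mul_sqrt_abs_le (b c : ℝ) : |√b - √c| * √|c| ≤ |b - c| := by
  rcases le_total 0 c with hc | hc <;> rcases le_total 0 b with hb | hb
  · have factor : b - c = (√b - √c) * (√b + √c) := by
      rw [mul_comm, ← sq_sub_sq, Real.sq_sqrt hb, Real.sq_sqrt hc]
    rw [abs_of_nonneg hc, factor, abs_mul, abs_of_nonneg (by positivity : 0 ≤ √b + √c)]
    gcongr
    exact le_add_of_nonneg_left (Real.sqrt_nonneg b)
  · rw [Real.sqrt_eq_zero_of_nonpos hb, zero_sub, abs_neg, abs_of_nonneg (Real.sqrt_nonneg c),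
      abs_of_nonneg hc, Real.mul_self_sqrt hc, abs_sub_comm]
    exact (le_sub_self_iff c).2 hb |>.trans (le_abs_self _)
  · have amgm := two_mul_le_add_sq √b √(-c)
    rw [Real.sq_sqrt hb, Real.sq_sqrt (neg_nonneg.2 hc)] at amgm
    rw [Real.sqrt_eq_zero_of_nonpos hc, sub_zero, abs_of_nonneg (Real.sqrt_nonneg b),
      abs_of_nonpos hc, abs_of_nonneg (by linarith)]
    linarith [mul_nonneg (Real.sqrt_nonneg b) (Real.sqrt_nonneg (-c))]
  · simp [Real.sqrt_eq_zero_of_nonpos hb, Real.sqrt_eq_zero_of_nonpos hc]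

lemma inv_sqrt_le_inv_sqrt_abs (y : ℝ) : (√y)⁻¹ ≤ (√|y|)⁻¹ := by
  rcases le_total 0 y with hy | hy
  · rw [abs_of_nonneg hy]
  · rw [Real.sqrt_eq_zero_of_nonpos hy, inv_zero]
    positivity

lemma sqrt_abs_sub_pos {ξ l : ℝ} (h : ξ ≠ l) : 0 < √|ξ - l| :=
  Real.sqrt_pos.2 (abs_pos.2 (sub_ne_zero.2 h))

lemma hasDerivAt_sqrt_const_sub {ξ l : ℝ} (h : ξ ≠ l) :
    HasDerivAt (fun m => √(ξ - m)) (-2⁻¹ * (√(ξ - l))⁻¹) l := by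
  refine (((hasDerivAt_id l).const_sub ξ).sqrt (sub_ne_zero.2 h)).congr_deriv ?_
  rw [id_eq, neg_mul, ← mul_inv, neg_div, one_div]

lemma hasDerivAt_integral_sqrt_sub_smul {μ : Measure ℝ} [NullSingletonClass μ] {h : ℝ → E} {l : ℝ}
    (h_int : Integrable (fun ξ => √(ξ - l) • h ξ) μ)
    (hdiv_int : Integrable (fun ξ => (√|ξ - l|)⁻¹ • h ξ) μ) :
    HasDerivAt (fun m => ∫ ξ, √(ξ - m) • h ξ ∂μ)
      ((-2⁻¹ : ℝ) • ∫ ξ, (√(ξ - l))⁻¹ • h ξ ∂μ) l := by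
  have hne : ∀ᵐ ξ ∂μ, ξ ≠ l := Measure.ae_ne μ l
  have h_meas : AEStronglyMeasurable h μ := by
    have hcont : Continuous fun ξ => √|ξ - l| := by fun_prop
    refine (hcont.aestronglyMeasurable.smul hdiv_int.aestronglyMeasurable).congr ?_
    filter_upwards [hne] with ξ hξ
    exact smul_inv_smul₀ (sqrt_abs_sub_pos hξ).ne' (h ξ)
  have hinv_int : Integrable (fun ξ => (√(ξ - l))⁻¹ • h ξ) μ := by
    have hinv_meas : Measurable fun ξ => (√(ξ - l))⁻¹ := by fun_prop
    refine hdiv_int.mono (hinv_meas.aestronglyMeasurable.smul h_meas) (ae_of_all μ fun ξ => ?_)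
    rw [norm_smul, norm_smul, Real.norm_of_nonneg (by positivity),
      Real.norm_of_nonneg (by positivity)]
    exact mul_le_mul_of_nonneg_right (inv_sqrt_le_inv_sqrt_abs (ξ - l)) (norm_nonneg (h ξ))
  rw [← MeasureTheory.integral_smul]
  refine hasDerivAt_integral_of_dominated_loc_of_lip' univ_mem
    (fun m _ => ?_) h_int (hinv_int.smul _) ?_ hdiv_int.norm ?_
  · have hcont : Continuous fun ξ => √(ξ - m) := by fun_prop
    exact hcont.aestronglyMeasurable.smul h_meas
  · filter_upwards [hne] with ξ hξ m _
    have hlip := abs_sqrt_sub_sqrt_mul_sqrt_abs_le (ξ - m) (ξ - l)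
    rw [sub_sub_sub_cancel_left, abs_sub_comm l m, ← le_div_iff₀ (sqrt_abs_sub_pos hξ)] at hlip
    calc ‖√(ξ - m) • h ξ - √(ξ - l) • h ξ‖ = |√(ξ - m) - √(ξ - l)| * ‖h ξ‖ := by
          rw [← sub_smul, norm_smul, Real.norm_eq_abs]
      _ ≤ |m - l| / √|ξ - l| * ‖h ξ‖ := by gcongr
      _ = ‖(√|ξ - l|)⁻¹ • h ξ‖ * ‖m - l‖ := by
          rw [norm_smul, norm_inv, Real.norm_of_nonneg (Real.sqrt_nonneg _), Real.norm_eq_abs]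
          ring
  · filter_upwards [hne] with ξ hξ
    exact ((hasDerivAt_sqrt_const_sub hξ).smul_const (h ξ)).congr_deriv (mul_smul _ _ _)

lemma hasDerivAt_intervalIntegral_sqrt_sub_smul {h : ℝ → E} {a l u : ℝ} (hal : a < l) (hlu : l < u)
    (hh : IntervalIntegrable (fun ξ => (√|ξ - l|)⁻¹ • h ξ) volume a u) :
    HasDerivAt (fun m => ∫ ξ in m..u, √(ξ - m) • h ξ)
      ((-2⁻¹ : ℝ) • ∫ ξ in l..u, (√(ξ - l))⁻¹ • h ξ) l := by
  have hau : a ≤ u := (hal.trans hlu).le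
  have h_int : IntervalIntegrable (fun ξ => √(ξ - l) • h ξ) volume a u := by
    have hcont : Continuous fun ξ => √(ξ - l) * √|ξ - l| := by fun_prop
    refine (hh.continuousOn_smul hcont.continuousOn).congr fun ξ _ => ?_
    rcases eq_or_ne ξ l with rfl | hξ
    · simp only [sub_self, Real.sqrt_zero, zero_mul, zero_smul]
    · simp only [mul_smul, smul_inv_smul₀ (sqrt_abs_sub_pos hξ).ne']
  have fixed := hasDerivAt_integral_sqrt_sub_smul
    ((intervalIntegrable_iff_integrableOn_Ioc_of_le hau).1 h_int)
    ((intervalIntegrable_iff_integrableOn_Ioc_of_le hau).1 hh)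
  simp only [← integral_of_le hau] at fixed
  rw [integral_eq_integral_of_eq_zero_left hal.le hlu.le fun ξ hξ => by
    rw [Real.sqrt_eq_zero_of_nonpos (sub_nonpos.2 hξ.2), inv_zero, zero_smul]] at fixed
  refine fixed.congr_of_eventuallyEq ?_
  filter_upwards [Ioo_mem_nhds hal hlu] with m hm
  exact (integral_eq_integral_of_eq_zero_left hm.1.le hm.2.le fun ξ hξ => by
    rw [Real.sqrt_eq_zero_of_nonpos (sub_nonpos.2 hξ.2), zero_smul]).symm

end

lemma inv_sqrt_eq_rpow {y : ℝ} (hy : 0 ≤ y) : (√y)⁻¹ = y ^ (-(1 / 2) : ℝ) := by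
  rw [Real.sqrt_eq_rpow, Real.rpow_neg hy]

lemma intervalIntegrable_inv_sqrt_abs (a b : ℝ) :
    IntervalIntegrable (fun ξ => (√|ξ|)⁻¹) volume a b := by
  refine intervalIntegrable_of_even (fun ξ => by rw [abs_neg]) fun x hx => ?_
  refine (intervalIntegrable_rpow' (r := -(1 / 2)) (by norm_num)).congr fun ξ hξ => ?_
  have hξ0 : 0 ≤ ξ := (uIoc_of_le hx.le ▸ hξ).1.le
  rw [abs_of_nonneg hξ0, inv_sqrt_eq_rpow hξ0]

lemma intervalIntegrable_inv_sqrt_abs_sub (l a b : ℝ) :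
    IntervalIntegrable (fun ξ => (√|ξ - l|)⁻¹) volume a b := by
  simpa using (intervalIntegrable_inv_sqrt_abs (a - l) (b - l)).comp_sub_right l

lemma intervalIntegrable_div_sqrt_abs_sub {g : ℝ → ℝ} {a b : ℝ} (l : ℝ)
    (hg : ContinuousOn g (uIcc a b)) :
    IntervalIntegrable (fun ξ => g ξ / √|ξ - l|) volume a b :=
  (intervalIntegrable_inv_sqrt_abs_sub l a b).continuousOn_mul hg

lemma integral_inv_sqrt {b : ℝ} (hb : 0 ≤ b) : ∫ ξ in 0..b, (√ξ)⁻¹ = 2 * √b := by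
  have toRpow : ∫ ξ in 0..b, (√ξ)⁻¹ = ∫ ξ in 0..b, ξ ^ (-(1 / 2) : ℝ) :=
    integral_congr fun ξ hξ => inv_sqrt_eq_rpow (uIcc_of_le hb ▸ hξ).1
  have exponent : (-(1 / 2) + 1 : ℝ) = 1 / 2 := by norm_num
  rw [toRpow, integral_rpow (Or.inl (by norm_num)), exponent, Real.zero_rpow (by norm_num),
    Real.sqrt_eq_rpow]
  ring

lemma integral_inv_sqrt_sub {l u : ℝ} (hlu : l ≤ u) :
    ∫ ξ in l..u, (√(ξ - l))⁻¹ = 2 * √(u - l) := by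
  rw [integral_comp_sub_right (fun y => (√y)⁻¹) l, sub_self, integral_inv_sqrt (sub_nonneg.2 hlu)]

lemma integral_add_const_div_sqrt_sub {g : ℝ → ℝ} {l u : ℝ} (c : ℝ) (hlu : l ≤ u)
    (hg : IntervalIntegrable (fun ξ => g ξ / √|ξ - l|) volume l u) :
    ∫ ξ in l..u, (g ξ + c) / √(ξ - l) =
      (∫ ξ in l..u, g ξ / √(ξ - l)) + c * (2 * √(u - l)) := by
  have abs_eq : ∀ ξ ∈ uIoc l u, |ξ - l| = ξ - l := fun ξ hξ =>
    abs_of_nonneg (sub_nonneg.2 (uIoc_of_le hlu ▸ hξ).1.le)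
  have hg' : IntervalIntegrable (fun ξ => g ξ / √(ξ - l)) volume l u :=
    hg.congr fun ξ hξ => by simp only [abs_eq ξ hξ]
  have hinv : IntervalIntegrable (fun ξ => (√(ξ - l))⁻¹) volume l u :=
    (intervalIntegrable_inv_sqrt_abs_sub l l u).congr fun ξ hξ => by simp only [abs_eq ξ hξ]
  simp only [add_div, div_eq_mul_inv c]
  rw [intervalIntegral.integral_add hg' (hinv.const_mul c), intervalIntegral.integral_const_mul,
    integral_inv_sqrt_sub hlu]

theorem stmt4_general {a l u : ℝ} (x xm t : ℝ) (hal : a < l) (hlu : l < u) {g : ℝ → ℝ}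
    (hg : IntervalIntegrable (fun ξ => g ξ / √|ξ - l|) volume a u) {φ θ : ℝ → ℝ}
    (hφ : ∀ᶠ m in 𝓝 l,
      φ m = √(u - m) * (x - xm) + ∫ ξ in m..u, (g ξ + 6 * t) * √(ξ - m))
    (hθ : θ l = (1 / (2 * √(u - l))) * ∫ ξ in l..u, g ξ / √(ξ - l)) :
    HasDerivAt φ (-(x - xm) / (2 * √(u - l)) - √(u - l) * (6 * t + θ l)) l := by
  have hs : 0 < √(u - l) := Real.sqrt_pos.2 (sub_pos.2 hlu)
  have hg_l : IntervalIntegrable (fun ξ => g ξ / √|ξ - l|) volume l u :=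
    hg.mono_set (uIcc_subset_uIcc_right (Icc_subset_uIcc ⟨hal.le, hlu.le⟩))
  have hg_t : IntervalIntegrable (fun ξ => (√|ξ - l|)⁻¹ • (g ξ + 6 * t)) volume a u := by
    have ht := intervalIntegrable_div_sqrt_abs_sub (a := a) (b := u) l
      (continuousOn_const (c := 6 * t))
    refine (hg.add ht).congr fun ξ _ => ?_
    simp only [smul_eq_mul, ← div_eq_inv_mul, add_div]
  have h_integral := hasDerivAt_intervalIntegral_sqrt_sub_smul hal hlu hg_t
  simp only [smul_eq_mul, ← div_eq_inv_mul, mul_comm √_] at h_integral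
  rw [integral_add_const_div_sqrt_sub (6 * t) hlu.le hg_l] at h_integral
  refine ((((hasDerivAt_sqrt_const_sub hlu.ne').mul_const (x - xm)).add
    h_integral).congr_of_eventuallyEq hφ).congr_deriv ?_
  rw [hθ]
  field_simp
  ring

/-- Equation (3.24) of the paper: the derivative of the phase
`φ(λ) = √(u-λ)(x-x⁻) + ∫_λ^u (g(ξ)+6t)√(ξ-λ) dξ` equals
`-(x-x⁻)/(2√(u-λ)) - √(u-λ)(6t + θ(λ))`. -/
theorem stmt4 (u x xm t : ℝ) (hu1 : -1 < u) (hu0 : u < 0)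
    (g : ℝ → ℝ) (hg : ContinuousOn g (Set.Ioc (-1) u))
    (φ θ : ℝ → ℝ)
    (hφ : ∀ l ∈ Set.Ioo (-1 : ℝ) u,
      φ l = Real.sqrt (u - l) * (x - xm) + ∫ ξ in l..u, (g ξ + 6 * t) * Real.sqrt (ξ - l))
    (hθ : ∀ l ∈ Set.Ioo (-1 : ℝ) u,
      θ l = (1 / (2 * Real.sqrt (u - l))) * ∫ ξ in l..u, g ξ / Real.sqrt (ξ - l)) :
    ∀ l ∈ Set.Ioo (-1 : ℝ) u,
      HasDerivAt φ
        (-(x - xm) / (2 * Real.sqrt (u - l)) - Real.sqrt (u - l) * (6 * t + θ l)) l := by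
  intro l hl
  obtain ⟨a, ha, hal⟩ := exists_between hl.1
  have hga : ContinuousOn g (uIcc a u) :=
    hg.mono (ordConnected_Ioc.uIcc_subset ⟨ha, (hal.trans hl.2).le⟩ ⟨hl.1.trans hl.2, le_rfl⟩)
  exact stmt4_general x xm t hal hl.2 (intervalIntegrable_div_sqrt_abs_sub l hga)
    (eventually_of_mem (Ioo_mem_nhds hl.1 hl.2) hφ) (hθ l hl)
end

section
/- Let $u < 0$ and define, for $\lambda \in \mathbb{C} \setminus [u, \infty)$, the $2 \times 2$ matrix $P^{(\infty)}(\lambda) = (-\lambda)^{1/4} \begin{pmatrix} (u - \lambda)^{-1/4} & 0 \\ 0 & (u - \lambda)^{1/4} \end{pmatrix} \begin{pmatrix} 1 & 1 \\ i & -i \end{pmatrix}$. Then for every $\lambda_0 > 0$, the boundary values $P^{(\infty)}_\pm(\lambda_0) = \lim_{\delta \to 0^+} P^{(\infty)}(\lambda_0 \pm i\delta)$ exist and satisfy $P^{(\infty)}_+(\lambda_0) = P^{(\infty)}_-(\lambda_0)\,\sigma_1$, and for every $\lambda_0 \in (u, 0)$ they exist and satisfy $P^{(\infty)}_+(\lambda_0)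 = i\, P^{(\infty)}_-(\lambda_0)\,\sigma_1$, where $\sigma_1 = \begin{pmatrix} 0 & 1 \\ 1 & 0 \end{pmatrix}$. -/
open Set Complex Filter

open scoped Topology Real

/-!
The function `(a - z) ^ s` equals `exp (∓ s π i) (z - a) ^ s` in the upper and lower half-planes,
and `(z - a) ^ s` is continuous at `x > a`. So the jump of `(a - z) ^ s` across `x` is the factor
`exp (-2 s π i)`, which is `-i` for `s = 1/4` and `i` for `s = -1/4`. Since
`diag(i, -i) N = i N σ₁` for `N = !![1, 1; i, -i]`, the matrix factor of the parametrix has jump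
matrix `i σ₁` on `(u, ∞)`. The scalar factor `(-z) ^ (1/4)` contributes `-i` on `(0, ∞)` and
nothing on `(-∞, 0)`.
-/

/-- The jump relation `f₊(x) = f₋(x) J` of a Riemann–Hilbert problem on the real line oriented from
left to right, so that `f₊` and `f₋` are the boundary values from the upper and the lower
half-plane. The limits are unrestricted within each half-plane, not only along the vertical line
through `x`. -/
def HasJump {E : Type*} [TopologicalSpace E] [Mul E] (f : ℂ → E) (x : ℝ) (J : E) : Prop :=
  ∃ p m : E, Tendsto f (𝓝[{z | 0 < z.im}] (x : ℂ)) (𝓝 p) ∧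
    Tendsto f (𝓝[{z | z.im < 0}] (x : ℂ)) (𝓝 m) ∧ p = m * J

lemma tendsto_add_mul_I_nhdsWithin_im_pos (x : ℝ) :
    Tendsto (fun δ : ℝ => (x : ℂ) + δ * I) (𝓝[>] 0) (𝓝[{z | 0 < z.im}] (x : ℂ)) := by
  have hcont : Continuous fun δ : ℝ => (x : ℂ) + δ * I := by fun_prop
  exact (hcont.tendsto' 0 x (by simp)).inf <|
    tendsto_principal_principal.2 fun δ hδ => by simpa using hδ

lemma tendsto_sub_mul_I_nhdsWithin_im_neg (x : ℝ) :
    Tendsto (fun δ : ℝ => (x : ℂ) - δ * I) (𝓝[>] 0) (𝓝[{z | z.im < 0}] (x : ℂ)) := by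
  have hcont : Continuous fun δ : ℝ => (x : ℂ) - δ * I := by fun_prop
  exact (hcont.tendsto' 0 x (by simp)).inf <|
    tendsto_principal_principal.2 fun δ hδ => by simpa using hδ

namespace HasJump

variable {x : ℝ}

lemma of_continuousAt {M : Type*} [TopologicalSpace M] [MulOneClass M] {f : ℂ → M}
    (hf : ContinuousAt f x) : HasJump f x 1 :=
  ⟨f x, f x, hf.mono_left nhdsWithin_le_nhds, hf.mono_left nhdsWithin_le_nhds, (mul_one _).symm⟩

lemma smul {R A : Type*} [TopologicalSpace R] [TopologicalSpace A] [Mul R] [Mul A] [SMul R A]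
    [IsScalarTower R R A] [IsScalarTower R A A] [SMulCommClass R A A] [ContinuousSMul R A]
    {a : ℂ → R} {F : ℂ → A} {c : R} {J : A} (ha : HasJump a x c) (hF : HasJump F x J) :
    HasJump (fun z => a z • F z) x (c • J) := by
  obtain ⟨_, a₀, ha_above, ha_below, rfl⟩ := ha
  obtain ⟨_, F₀, hF_above, hF_below, rfl⟩ := hF
  exact ⟨_, a₀ • F₀, ha_above.smul hF_above, ha_below.smul hF_below,
    (smul_mul_smul_comm a₀ F₀ c J).symm⟩

lemma mul_const_of_semiconjBy {M : Type*} [TopologicalSpace M] [Semigroup M] [ContinuousMul M]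
    {F : ℂ → M} {J K N : M} (hF : HasJump F x J) (hN : SemiconjBy N K J) :
    HasJump (fun z => F z * N) x K := by
  obtain ⟨_, F₀, hF_above, hF_below, rfl⟩ := hF
  exact ⟨_, F₀ * N, hF_above.mul_const N, hF_below.mul_const N,
    by rw [mul_assoc, mul_assoc, hN.eq]⟩

lemma diagonal {n R : Type*} [Fintype n] [DecidableEq n] [TopologicalSpace R]
    [NonUnitalNonAssocSemiring R] {d : ℂ → n → R} {c : n → R}
    (hd : ∀ i, HasJump (fun z => d z i) x (c i)) :
    HasJump (fun z => Matrix.diagonal (d z)) x (Matrix.diagonal c) := by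
  choose p m h_above h_below hp using hd
  have hdiag : Continuous (Matrix.diagonal : (n → R) → Matrix n n R) :=
    continuous_id.matrix_diagonal
  refine ⟨.diagonal p, .diagonal m, (hdiag.tendsto p).comp (tendsto_pi_nhds.2 h_above),
    (hdiag.tendsto m).comp (tendsto_pi_nhds.2 h_below), ?_⟩
  rw [Matrix.diagonal_mul_diagonal, funext hp]

lemma exists_tendsto_vertical_apply {n R : Type*} [Fintype n] [TopologicalSpace R]
    [NonUnitalNonAssocSemiring R] {F : ℂ → Matrix n n R} {J : Matrix n n R} (hF : HasJump F x J) :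
    ∃ p m : Matrix n n R,
      (∀ i j, Tendsto (fun δ : ℝ => F (x + δ * I) i j) (𝓝[>] 0) (𝓝 (p i j))) ∧
      (∀ i j, Tendsto (fun δ : ℝ => F (x - δ * I) i j) (𝓝[>] 0) (𝓝 (m i j))) ∧
      p = m * J := by
  obtain ⟨p, m, h_above, h_below, hp⟩ := hF
  have h_add := h_above.comp (tendsto_add_mul_I_nhdsWithin_im_pos x)
  have h_sub := h_below.comp (tendsto_sub_mul_I_nhdsWithin_im_neg x)
  exact ⟨p, m, fun i j => (h_add.apply_nhds i).apply_nhds j,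
    fun i j => (h_sub.apply_nhds i).apply_nhds j, hp⟩

end HasJump

lemma neg_cpow_of_im_pos {z : ℂ} (hz : 0 < z.im) (s : ℂ) :
    (-z) ^ s = exp (-(π * I * s)) * z ^ s := by
  have hz₀ : z ≠ 0 := by rintro rfl; simp at hz
  have hlog : log (-z) = log z - π * I := by
    rw [log, log, norm_neg, arg_neg_eq_arg_sub_pi_of_im_pos hz]
    push_cast
    ring
  rw [cpow_def_of_ne_zero (neg_ne_zero.2 hz₀), cpow_def_of_ne_zero hz₀, hlog, ← exp_add]
  ring_nf

lemma neg_cpow_of_im_neg {z : ℂ} (hz : z.im < 0) (s : ℂ) :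
    (-z) ^ s = exp (π * I * s) * z ^ s := by
  have h := neg_cpow_of_im_pos (z := -z) (by simpa using hz) s
  rw [neg_neg] at h
  rw [h, ← mul_assoc, ← exp_add, add_neg_cancel, exp_zero, one_mul]

section Power

variable {a x : ℝ}

lemma hasJump_sub_cpow (h : a < x) (s : ℂ) :
    HasJump (fun z => (a - z) ^ s) x (exp (-(2 * π * I * s))) := by
  have hcont : ContinuousAt (fun z : ℂ => (z - a) ^ s) x :=
    ContinuousAt.cpow (by fun_prop) continuousAt_const (.inl (by simpa using h))
  refine ⟨exp (-(π * I * s)) * (x - a) ^ s, exp (π * I * s) * (x - a) ^ s,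
    ((hcont.mono_left nhdsWithin_le_nhds).const_mul _).congr' ?_,
    ((hcont.mono_left nhdsWithin_le_nhds).const_mul _).congr' ?_, ?_⟩
  · filter_upwards [self_mem_nhdsWithin] with z hz
    rw [← neg_cpow_of_im_pos (by simpa using hz), neg_sub]
  · filter_upwards [self_mem_nhdsWithin] with z hz
    rw [← neg_cpow_of_im_neg (by simpa using hz), neg_sub]
  · have hexp : exp (-(π * I * s)) = exp (π * I * s) * exp (-(2 * π * I * s)) := by
      rw [← exp_add]
      ring_nf
    rw [hexp, mul_right_comm]

lemma hasJump_sub_cpow_quarter (h : a < x) :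
    HasJump (fun z => (a - z) ^ ((1 : ℂ) / 4)) x (-I) := by
  have hexp : exp (-(2 * π * I * (1 / 4))) = -I := by
    refine Eq.trans ?_ exp_neg_pi_div_two_mul_I
    ring_nf
  simpa only [hexp] using hasJump_sub_cpow h (1 / 4)

lemma hasJump_sub_cpow_neg_quarter (h : a < x) :
    HasJump (fun z => (a - z) ^ (-(1 : ℂ) / 4)) x I := by
  have hexp : exp (-(2 * π * I * (-1 / 4))) = I := by
    refine Eq.trans ?_ exp_pi_div_two_mul_I
    ring_nf
  simpa only [hexp] using hasJump_sub_cpow h (-1 / 4)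

end Power

/-- The explicit outside parametrix `P⁽∞⁾` of (3.30). Mathlib's principal powers agree with the
prescribed branches: `(a - z) ^ s` is analytic off `[a, ∞)` and positive for real `z < a` when `s`
is real. -/
noncomputable def outsideParametrix (u : ℝ) (z : ℂ) : Matrix (Fin 2) (Fin 2) ℂ :=
  (-z) ^ ((1 : ℂ) / 4) •
    (!![((u : ℂ) - z) ^ (-(1 : ℂ) / 4), 0; 0, ((u : ℂ) - z) ^ ((1 : ℂ) / 4)] * !![1, 1; I, -I])

section OutsideParametrix

variable {u x : ℝ}

lemma hasJump_outsideParametrix_of_hasJump {c : ℂ} (hux : u < x)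
    (hc : HasJump (fun z => (-z) ^ ((1 : ℂ) / 4)) x c) :
    HasJump (outsideParametrix u) x (c • I • !![0, 1; 1, 0]) := by
  have hdiag : HasJump (fun z : ℂ =>
      !![(u - z) ^ (-(1 : ℂ) / 4), 0; 0, (u - z) ^ ((1 : ℂ) / 4)]) x !![I, 0; 0, -I] := by
    simp only [← Matrix.diagonal_vec2]
    exact .diagonal <| Fin.forall_fin_two.2
      ⟨hasJump_sub_cpow_neg_quarter hux, hasJump_sub_cpow_quarter hux⟩
  have hconj : SemiconjBy !![1, 1; I, -I] (I • !![0, 1; 1, 0]) !![I, 0; 0, -I] := by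
    ext i j
    fin_cases i <;> fin_cases j <;> simp
  exact hc.smul (hdiag.mul_const_of_semiconjBy hconj)

lemma hasJump_outsideParametrix_of_pos (hux : u < x) (hx : 0 < x) :
    HasJump (outsideParametrix u) x !![0, 1; 1, 0] := by
  have hc : HasJump (fun z => (-z) ^ ((1 : ℂ) / 4)) x (-I) := by
    simpa using hasJump_sub_cpow_quarter hx
  simpa [smul_smul] using hasJump_outsideParametrix_of_hasJump hux hc

lemma hasJump_outsideParametrix_of_neg (hux : u < x) (hx : x < 0) :
    HasJump (outsideParametrix u) x (I • !![0, 1; 1, 0]) := by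
  have hcont : ContinuousAt (fun z : ℂ => (-z) ^ ((1 : ℂ) / 4)) x :=
    continuousAt_neg.cpow continuousAt_const (.inl (by simpa using hx))
  simpa only [one_smul] using hasJump_outsideParametrix_of_hasJump hux (.of_continuousAt hcont)

end OutsideParametrix

/-- The explicit outside parametrix (3.30) satisfies the jump conditions (3.27)-(3.28):
`P⁽∞⁾₊(λ₀) = P⁽∞⁾₋(λ₀) σ₁` on `(0, ∞)` and `P⁽∞⁾₊(λ₀) = i P⁽∞⁾₋(λ₀) σ₁` on `(u, 0)`. -/
theorem stmt11 (u : ℝ) (hu : u < 0)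
    (P : ℂ → Matrix (Fin 2) (Fin 2) ℂ)
    (hP : ∀ l : ℂ, P l = ((-l) ^ ((1 : ℂ) / 4)) •
        (!![((u : ℂ) - l) ^ (-(1 : ℂ) / 4), 0; 0, ((u : ℂ) - l) ^ ((1 : ℂ) / 4)] *
          !![1, 1; Complex.I, -Complex.I])) :
    (∀ l₀ : ℝ, 0 < l₀ →
      ∃ Pp Pm : Matrix (Fin 2) (Fin 2) ℂ,
        (∀ i j, Tendsto (fun δ : ℝ => P ((l₀ : ℂ) + δ * Complex.I) i j)
          (nhdsWithin 0 (Set.Ioi 0)) (nhds (Pp i j))) ∧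
        (∀ i j, Tendsto (fun δ : ℝ => P ((l₀ : ℂ) - δ * Complex.I) i j)
          (nhdsWithin 0 (Set.Ioi 0)) (nhds (Pm i j))) ∧
        Pp = Pm * !![0, 1; 1, 0]) ∧
    (∀ l₀ : ℝ, u < l₀ → l₀ < 0 →
      ∃ Pp Pm : Matrix (Fin 2) (Fin 2) ℂ,
        (∀ i j, Tendsto (fun δ : ℝ => P ((l₀ : ℂ) + δ * Complex.I) i j)
          (nhdsWithin 0 (Set.Ioi 0)) (nhds (Pp i j))) ∧
        (∀ i j, Tendsto (fun δ : ℝ => P ((l₀ : ℂ) - δ * Complex.I) i j)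
          (nhdsWithin 0 (Set.Ioi 0)) (nhds (Pm i j))) ∧
        Pp = Complex.I • (Pm * !![0, 1; 1, 0])) := by
  obtain rfl : P = outsideParametrix u := funext hP
  refine ⟨fun l₀ h₀ => ?_, fun l₀ hl h₀ => ?_⟩
  · exact (hasJump_outsideParametrix_of_pos (hu.trans h₀) h₀).exists_tendsto_vertical_apply
  · simpa only [Matrix.mul_smul] using
      (hasJump_outsideParametrix_of_neg hl h₀).exists_tendsto_vertical_apply
end
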